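/- Let A and B be separated cocomplete V-categories. Every G-ideal ξ on A ⊗ B preserves suprema separately in each variable: ξ(sup_A φ, b) = ⨅_a [φ(a), ξ(a,b)] for all φ ∈ DA and b ∈ B, and ξ(a, sup_B ψ) = ⨅_b [ψ(b), ξ(a,b)] for all a ∈ A and ψ ∈ DB. (Equivalently, the canonical V-functor i : A ⊗ B → A ⊗_V B is a bimorphism.) -/

import Mathlib

/-!
Evaluate the G-ideal identity at a representable presheaf in one of the two variables. Since
`sup (B(·, b)) = b` by separatedness, the right-hand side becomes `ξ (sup φ) b`; on the left, the
Yoneda lemma for the presheaf `ξ a` collapses the infimum over `b'` of `[φ a ⊗ B(b', b), ξ a b']`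
to `[φ a, ξ a b]`. The other variable is symmetric.
-/

/- `V` is a commutative quantale: a complete lattice with a commutative monoid
structure `(*, 1)` distributing over arbitrary suprema. -/
variable {V : Type*} [CommMonoid V] [CompleteLattice V] [IsQuantale V]

/-- The internal hom `[v,w]` of the commutative quantale `V`. -/
def qhom (v w : V) : V := sSup {u | u * v ≤ w}

/-- A separated cocomplete `V`-category: a `V`-category whose underlying order is
antisymmetric, equipped with `sup : DA → A` satisfying
`A(sup φ, a) = ⨅ a', [φ(a'), A(a',a)]`. -/
structure SupCat (V : Type*) [CommMonoid V] [CompleteLattice V] [IsQuantale V] where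
  carrier : Type*
  hom : carrier → carrier → V
  refl : ∀ x, 1 ≤ hom x x
  trans : ∀ x y z, hom x y * hom y z ≤ hom x z
  separated : ∀ x y, 1 ≤ hom x y → 1 ≤ hom y x → x = y
  sup : {φ : carrier → V // ∀ x y, hom x y * φ y ≤ φ x} → carrier
  hom_sup : ∀ (φ : {φ : carrier → V // ∀ x y, hom x y * φ y ≤ φ x}) (a : carrier),
      hom (sup φ) a = ⨅ a', qhom (φ.1 a') (hom a' a)

/-- The set of contravariant presheaves on a separated cocomplete `V`-category. -/
abbrev PSh (A : SupCat V) := {φ : A.carrier → V // ∀ x y, A.hom x y * φ y ≤ φ x}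

/-- A G-ideal on `A ⊗ B`: a presheaf `ξ` on the tensor product `V`-category `A ⊗ B`
such that `⨅_{a,b} [φ(a) ⊗ ψ(b), ξ(a,b)] = ξ(sup_A φ, sup_B ψ)` for all presheaves
`φ` on `A` and `ψ` on `B`. -/
def IsGIdeal (A B : SupCat V) (ξ : A.carrier → B.carrier → V) : Prop :=
  (∀ a a' b b', A.hom a a' * B.hom b b' * ξ a' b' ≤ ξ a b) ∧
  (∀ (φ : PSh A) (ψ : PSh B),
      (⨅ a, ⨅ b, qhom (φ.1 a * ψ.1 b) (ξ a b)) = ξ (A.sup φ) (B.sup ψ))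

theorem le_qhom_iff {u v w : V} : u ≤ qhom v w ↔ u * v ≤ w := by
  refine ⟨fun h => ?_, fun h => le_sSup h⟩
  calc u * v ≤ qhom v w * v := mul_le_mul_left h v
    _ ≤ w := by
      rw [qhom, sSup_mul_distrib]
      exact iSup₂_le fun _ hx => hx

/-- The representable presheaf `A(·, a)`. -/
def yo (A : SupCat V) (a : A.carrier) : PSh A := ⟨fun x => A.hom x a, fun x y => A.trans x y a⟩

theorem sup_yo (A : SupCat V) (a : A.carrier) : A.sup (yo A a) = a := by
  have key := A.hom_sup (yo A a)
  apply A.separated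
  · rw [key]
    exact le_iInf fun x => le_qhom_iff.2 (by rw [one_mul]; rfl)
  · -- The unit inequality `1 ≤ A(sup, sup)`, unfolded at the component `a`.
    have h := A.refl (A.sup (yo A a))
    rw [key] at h
    have h' := le_qhom_iff.1 (h.trans (iInf_le _ a))
    rw [one_mul] at h'
    exact (A.refl a).trans h'

/-- Yoneda lemma for a presheaf `χ`, with a parameter `v`: the infimum of `[v ⊗ A(x, a), χ x]`
is `[v, χ a]`. -/
theorem iInf_qhom_mul_yo (A : SupCat V) (χ : PSh A) (v : V) (a : A.carrier) :
    (⨅ x, qhom (v * (yo A a).1 x) (χ.1 x)) = qhom v (χ.1 a) := by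
  apply le_antisymm
  · refine (iInf_le _ a).trans (le_qhom_iff.2 ?_)
    calc qhom (v * A.hom a a) (χ.1 a) * v
        = qhom (v * A.hom a a) (χ.1 a) * (v * 1) := by rw [mul_one]
      _ ≤ qhom (v * A.hom a a) (χ.1 a) * (v * A.hom a a) :=
          mul_le_mul_right (mul_le_mul_right (A.refl a) _) _
      _ ≤ χ.1 a := le_qhom_iff.1 le_rfl
  · refine le_iInf fun x => le_qhom_iff.2 ?_
    calc qhom v (χ.1 a) * (v * A.hom x a)
        = A.hom x a * (qhom v (χ.1 a) * v) := by rw [← mul_assoc, mul_comm]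
      _ ≤ A.hom x a * χ.1 a := mul_le_mul_right (le_qhom_iff.1 le_rfl) _
      _ ≤ χ.1 x := χ.2 x a

/-- Every G-ideal preserves suprema separately in each variable. -/
theorem stmt4 (A B : SupCat V) (ξ : A.carrier → B.carrier → V)
    (hξ : IsGIdeal A B ξ) :
    (∀ (φ : PSh A) (b : B.carrier),
        ξ (A.sup φ) b = ⨅ a, qhom (φ.1 a) (ξ a b)) ∧
    (∀ (a : A.carrier) (ψ : PSh B),
        ξ a (B.sup ψ) = ⨅ b, qhom (ψ.1 b) (ξ a b)) := by
  obtain ⟨hpre, hsup⟩ := hξ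
  have hleft : ∀ a b b', B.hom b b' * ξ a b' ≤ ξ a b := fun a b b' =>
    calc B.hom b b' * ξ a b' = 1 * B.hom b b' * ξ a b' := by rw [one_mul]
      _ ≤ A.hom a a * B.hom b b' * ξ a b' :=
          mul_le_mul_left (mul_le_mul_left (A.refl a) _) _
      _ ≤ ξ a b := hpre a a b b'
  have hright : ∀ b a a', A.hom a a' * ξ a' b ≤ ξ a b := fun b a a' =>
    calc A.hom a a' * ξ a' b = A.hom a a' * 1 * ξ a' b := by rw [mul_one]
      _ ≤ A.hom a a' * B.hom b b * ξ a' b :=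
          mul_le_mul_left (mul_le_mul_right (B.refl b) _) _
      _ ≤ ξ a b := hpre a a' b b
  refine ⟨fun φ b => ?_, fun a ψ => ?_⟩
  · have h := hsup φ (yo B b)
    rw [sup_yo] at h
    rw [← h]
    exact iInf_congr fun a => iInf_qhom_mul_yo B ⟨ξ a, hleft a⟩ (φ.1 a) b
  · have h := hsup (yo A a) ψ
    rw [sup_yo, iInf_comm] at h
    rw [← h]
    refine iInf_congr fun b => ?_
    rw [← iInf_qhom_mul_yo A ⟨fun a => ξ a b, hright b⟩ (ψ.1 b) a]
    exact iInf_congr fun x => by rw [mul_comm]
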